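/- For every ε > 0 there exists k such that for every finite field F_q and every integer n ≥ 2, the set of g ∈ SL_n(F_q) whose characteristic polynomial has at least k·log n monic irreducible factors in F_q[x] (counted with multiplicity) has cardinality at most ε · |SL_n(F_q)|. -/

import Mathlib

/-!
Count the pairs `(g, v)` with `g ∈ SL(V)` and `0 ≠ v ∈ V` according to the minimal polynomial `p` of
`v` with respect to `g`. As `p` divides the characteristic polynomial, the latter has at most
`n - deg p` more irreducible factors than `p`.

A pair determines the linear map `T : r ↦ r(g) v` on `K[X]`, whose kernel is `(p)`, and `g` is
prescribed on the range of `T`. If two such maps have the same kernel, an element of `GL(V)` carries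
one to the other, and an element of `SL(V)` does so if `deg p < n`. Hence a given `p` arises from at
most `|SL(V)|` pairs if `deg p < n`, and from at most `(q - 1) |SL(V)|` pairs if `deg p = n`. In the
latter case `p` is the characteristic polynomial, so `p(0) = (-1) ^ n`, which makes up for the
factor `q - 1`. Therefore the number of factors of the characteristic polynomial is controlled by
the number of factors of all monic polynomials of degree `d ≤ n` with prescribed nonzero constant
coefficient. The latter is `O(log d)` on average, the pairs with `deg p = d` are at most a
proportion of about `q ^ (d - n)` of all pairs, and Markov's inequality concludes.
-/

open Module Polynomial UniqueFactorizationMonoid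

section Factorization

section Mul

variable {α : Type*} [CommMonoidWithZero α] [UniqueFactorizationMonoid α] {a b : α}

lemma card_factors_mul (ha : a ≠ 0) (hb : b ≠ 0) :
    (factors (a * b)).card = (factors a).card + (factors b).card := by
  rw [← Multiset.card_add]
  exact Multiset.card_eq_card_of_rel (factors_mul ha hb)

end Mul

variable {K : Type*} [Field K]

lemma card_factors_le_natDegree {p : K[X]} (hp : p ≠ 0) :
    (factors p).card ≤ p.natDegree := by
  have h0 : (0 : K[X]) ∉ factors p := fun h => (irreducible_of_factor _ h).ne_zero rfl
  rw [← natDegree_eq_of_degree_eq (degree_eq_degree_of_associated (factors_prod hp)),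
    natDegree_multiset_prod _ h0, ← Multiset.card_map natDegree,
    ← mul_one (Multiset.card _), ← smul_eq_mul]
  refine Multiset.card_nsmul_le_sum fun x hx => ?_
  obtain ⟨φ, hφ, rfl⟩ := Multiset.mem_map.1 hx
  exact (irreducible_of_factor _ hφ).natDegree_pos

lemma pow_dvd_iff_le_count_normalizedFactors [DecidableEq K] {p φ : K[X]} (hp : p ≠ 0)
    (hφ : Irreducible φ) (hφm : φ.Monic) {j : ℕ} :
    φ ^ j ∣ p ↔ j ≤ (normalizedFactors p).count φ := by
  rw [pow_dvd_iff_le_emultiplicity, emultiplicity_eq_count_normalizedFactors hφ hp,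
    hφm.normalize_eq_self, Nat.cast_le]

open scoped Classical in
lemma card_filter_pow_dvd_eq_count {p φ : K[X]} (hp : p ≠ 0) (hφ : Irreducible φ) (hφm : φ.Monic)
    {D : ℕ} (hD : p.natDegree ≤ D) :
    ((Finset.Icc 1 D).filter (φ ^ · ∣ p)).card = (normalizedFactors p).count φ := by
  have hle : (normalizedFactors p).count φ ≤ D := by
    have h := natDegree_le_of_dvd
      ((pow_dvd_iff_le_count_normalizedFactors hp hφ hφm).2 le_rfl) hp
    rw [natDegree_pow] at h
    exact ((Nat.le_mul_of_pos_right _ hφ.natDegree_pos).trans h).trans hD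
  have : (Finset.Icc 1 D).filter (φ ^ · ∣ p) =
      Finset.Icc 1 ((normalizedFactors p).count φ) := by
    ext j
    simp only [Finset.mem_filter, Finset.mem_Icc,
      pow_dvd_iff_le_count_normalizedFactors hp hφ hφm]
    omega
  rw [this, Nat.card_Icc, Nat.add_sub_cancel]

variable [Finite K]

lemma finite_setOf_natDegree_le (d : ℕ) : {p : K[X] | p.natDegree ≤ d}.Finite := by
  have : Finite (degreeLT K (d + 1)) := .of_equiv _ (degreeLTEquiv K (d + 1)).toEquiv.symm
  exact (degreeLT K (d + 1) : Set K[X]).toFinite.subset fun p hp =>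
    mem_degreeLT.2 (degree_le_natDegree.trans_lt (by exact_mod_cast Nat.lt_succ_of_le hp))

variable (K) in
/-- The monic irreducible polynomials of degree `m` over the finite field `K`. -/
noncomputable def monicIrreducibles (m : ℕ) : Finset K[X] :=
  Set.Finite.toFinset (s := {p | p.Monic ∧ Irreducible p ∧ p.natDegree = m})
    ((finite_setOf_natDegree_le m).subset fun _ hp => hp.2.2.le)

@[simp]
lemma mem_monicIrreducibles {m : ℕ} {p : K[X]} :
    p ∈ monicIrreducibles K m ↔ p.Monic ∧ Irreducible p ∧ p.natDegree = m := by
  simp [monicIrreducibles]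

lemma mul_card_monicIrreducibles_le (m : ℕ) :
    m * (monicIrreducibles K m).card ≤ Nat.card K ^ m := by
  rcases Nat.eq_zero_or_pos m with rfl | hm
  · simp
  have hq : 1 < Nat.card K := Finite.one_lt_card
  have hdvd : ∏ p ∈ monicIrreducibles K m, p ∣ X ^ Nat.card K ^ m - X := by
    refine Finset.prod_dvd_of_coprime (fun p hp r hr hpr => ?_) fun p hp => ?_
    · simp only [Finset.mem_coe, mem_monicIrreducibles] at hp hr
      exact hp.2.1.coprime_iff_not_dvd.2 fun h =>
        hpr (eq_of_monic_of_associated hp.1 hr.1 (hp.2.1.associated_of_dvd hr.2.1 h))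
    · rw [mem_monicIrreducibles] at hp
      exact hp.2.1.natDegree_dvd_iff_dvd_X_pow_card_pow_sub_X.1 hp.2.2.dvd
  have h := natDegree_le_of_dvd hdvd (FiniteField.X_pow_card_pow_sub_X_ne_zero _ hm.ne' hq)
  rw [FiniteField.X_pow_card_pow_sub_X_natDegree_eq _ hm.ne' hq,
    natDegree_prod_of_monic _ _ fun p hp => (mem_monicIrreducibles.1 hp).1,
    Finset.sum_congr rfl fun p hp => (mem_monicIrreducibles.1 hp).2.2] at h
  simpa [mul_comm] using h

open scoped Classical in
lemma card_factors_eq_sum {p : K[X]} (hp : p ≠ 0) {D : ℕ} (hD : p.natDegree ≤ D) :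
    (factors p).card = ∑ m ∈ Finset.Icc 1 D, ∑ φ ∈ monicIrreducibles K m,
      ((Finset.Icc 1 D).filter (φ ^ · ∣ p)).card := by
  have hdisj : (Finset.Icc 1 D : Set ℕ).PairwiseDisjoint (monicIrreducibles K) := by
    refine fun m _ k _ hmk => Finset.disjoint_left.2 fun φ hφm hφk => hmk ?_
    rw [mem_monicIrreducibles] at hφm hφk
    exact hφm.2.2.symm.trans hφk.2.2
  have hmem : ∀ φ ∈ normalizedFactors p,
      φ ∈ (Finset.Icc 1 D).biUnion (monicIrreducibles K) := by
    intro φ hφ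
    have hirr := irreducible_of_normalized_factor φ hφ
    have hdeg := natDegree_le_of_dvd (dvd_of_mem_normalizedFactors hφ) hp
    rw [Finset.mem_biUnion]
    refine ⟨φ.natDegree, Finset.mem_Icc.2 ⟨hirr.natDegree_pos, hdeg.trans hD⟩, ?_⟩
    have hmonic := normalize_normalized_factor φ hφ ▸ monic_normalize hirr.ne_zero
    exact mem_monicIrreducibles.2 ⟨hmonic, hirr, rfl⟩
  calc (factors p).card = (normalizedFactors p).card := by simp [normalizedFactors]
    _ = ∑ φ ∈ (Finset.Icc 1 D).biUnion (monicIrreducibles K), (normalizedFactors p).count φ :=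
      (Multiset.sum_count_eq_card hmem).symm
    _ = ∑ m ∈ Finset.Icc 1 D, ∑ φ ∈ monicIrreducibles K m, (normalizedFactors p).count φ :=
      Finset.sum_biUnion hdisj
    _ = _ := Finset.sum_congr rfl fun m _ => Finset.sum_congr rfl fun φ hφ => by
      rw [mem_monicIrreducibles] at hφ
      rw [card_filter_pow_dvd_eq_count hp hφ.2.1 hφ.1 hD]

open scoped Classical in
/- Splitting off one irreducible factor first makes every counted power `φ ^ j` a proper divisor;
prescribing the constant coefficient makes `p` divisible by a given `s` with the expected frequency
only for `s` of smaller degree. -/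
lemma card_factors_le_one_add_sum {p : K[X]} (hp : p ≠ 0) :
    (factors p).card ≤ 1 + ∑ m ∈ Finset.Icc 1 p.natDegree, ∑ φ ∈ monicIrreducibles K m,
      ((Finset.Icc 1 p.natDegree).filter
        fun j => j * m < p.natDegree ∧ φ ^ j ∣ p).card := by
  by_cases hu : IsUnit p
  · have := card_factors_le_natDegree hp
    rw [natDegree_eq_zero_of_isUnit hu] at this
    omega
  obtain ⟨φ₀, h₀, r, rfl⟩ := WfDvdMonoid.exists_irreducible_factor hu hp
  have hr : r ≠ 0 := right_ne_zero_of_mul hp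
  have hdeg : r.natDegree < (φ₀ * r).natDegree := by
    rw [natDegree_mul h₀.ne_zero hr]
    exact Nat.lt_add_of_pos_left h₀.natDegree_pos
  rw [card_factors_mul h₀.ne_zero hr, card_factors_of_irreducible h₀,
    card_factors_eq_sum hr hdeg.le]
  refine Nat.add_le_add_left (Finset.sum_le_sum fun m _ => Finset.sum_le_sum fun φ hφ =>
    Finset.card_le_card ?_) _
  refine Finset.monotone_filter_right _ fun j _ hj => ⟨?_, hj.mul_left φ₀⟩
  rw [← (mem_monicIrreducibles.1 hφ).2.2, ← natDegree_pow]
  exact (natDegree_le_of_dvd hj hr).trans_lt hdeg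

/-- The monic polynomials of degree `d` over the finite field `K` whose constant coefficient lies
in `C`. -/
noncomputable def monicsWithConst (d : ℕ) (C : Finset K) : Finset K[X] :=
  Set.Finite.toFinset (s := {p | p.Monic ∧ p.natDegree = d ∧ p.coeff 0 ∈ C})
    ((finite_setOf_natDegree_le d).subset fun _ hp => hp.2.1.le)

@[simp]
lemma mem_monicsWithConst {d : ℕ} {C : Finset K} {p : K[X]} :
    p ∈ monicsWithConst d C ↔ p.Monic ∧ p.natDegree = d ∧ p.coeff 0 ∈ C := by
  simp [monicsWithConst]

lemma card_monicsWithConst_le (d : ℕ) (C : Finset K) :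
    (monicsWithConst d C).card ≤ C.card * Nat.card K ^ (d - 1) := by
  have := Fintype.ofFinite K
  have h := Finset.card_le_card_of_injOn (s := monicsWithConst d C)
    (t := C ×ˢ (Finset.univ : Finset (Fin (d - 1) → K)))
    (fun p => (p.coeff 0, fun i => p.coeff (i + 1))) (fun p hp => by simp_all) (by
      intro p hp r hr h
      simp only [Finset.mem_coe, mem_monicsWithConst] at hp hr
      rw [Prod.mk.injEq] at h
      refine (ext_iff_natDegree_le hp.2.1.le hr.2.1.le).2 fun i hi => ?_
      rcases i with - | i
      · exact h.1
      rcases hi.eq_or_lt with rfl | hid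
      · conv_lhs => rw [← hp.2.1, hp.1.coeff_natDegree]
        rw [← hr.2.1, hr.1.coeff_natDegree]
      · exact congrFun h.2 ⟨i, by omega⟩)
  simpa [Nat.card_eq_fintype_card] using h

open scoped Classical in
lemma card_filter_dvd_monicsWithConst_le (d : ℕ) {C : Finset K} (hC : 0 ∉ C) {s : K[X]}
    (hs : s.Monic) :
    ((monicsWithConst d C).filter (s ∣ ·)).card ≤
      C.card * Nat.card K ^ (d - s.natDegree - 1) := by
  calc ((monicsWithConst d C).filter (s ∣ ·)).card
      ≤ ((monicsWithConst (d - s.natDegree) (C.image (· / s.coeff 0))).image (s * ·)).card := by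
        refine Finset.card_le_card fun p hp => ?_
        obtain ⟨hp, t, rfl⟩ := Finset.mem_filter.1 hp
        obtain ⟨hst, hd, hc⟩ := mem_monicsWithConst.1 hp
        have ht : t.Monic := hs.of_mul_monic_left hst
        rw [mul_coeff_zero] at hc
        have hs0 : s.coeff 0 ≠ 0 := fun h => hC (by simpa [h] using hc)
        refine Finset.mem_image_of_mem _ (mem_monicsWithConst.2 ⟨ht, ?_, ?_⟩)
        · rw [← hd, hs.natDegree_mul ht, Nat.add_sub_cancel_left]
        · exact Finset.mem_image.2 ⟨_, hc, mul_div_cancel_left₀ _ hs0⟩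
    _ ≤ (monicsWithConst (d - s.natDegree) (C.image (· / s.coeff 0))).card :=
        Finset.card_image_le
    _ ≤ (C.image (· / s.coeff 0)).card * Nat.card K ^ (d - s.natDegree - 1) :=
        card_monicsWithConst_le _ _
    _ ≤ C.card * Nat.card K ^ (d - s.natDegree - 1) :=
        Nat.mul_le_mul_right _ Finset.card_image_le

lemma sum_Icc_pow_le_two_mul {x : ℝ} (hx : 0 ≤ x) (hx2 : x ≤ 2⁻¹) (d : ℕ) :
    ∑ j ∈ Finset.Icc 1 d, x ^ j ≤ 2 * x := by
  rw [← Finset.Ico_succ_right_eq_Icc]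
  refine (geom_sum_Ico_le_of_lt_one hx (by linarith)).trans ?_
  rw [pow_one, div_le_iff₀ (by linarith)]
  nlinarith

open scoped Classical in
lemma card_filter_pow_dvd_monicsWithConst_le {d : ℕ} {C : Finset K} (hC : 0 ∉ C) {φ : K[X]}
    (hφ : φ.Monic) {j : ℕ} (hj : j * φ.natDegree < d) :
    (((monicsWithConst d C).filter (φ ^ j ∣ ·)).card : ℝ) ≤
      C.card * (Nat.card K : ℝ) ^ (d - 1) * ((Nat.card K : ℝ) ^ φ.natDegree)⁻¹ ^ j := by
  have hq : (Nat.card K : ℝ) ≠ 0 := by exact_mod_cast Nat.card_pos.ne'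
  have h := card_filter_dvd_monicsWithConst_le d hC (hφ.pow j)
  rw [natDegree_pow, Nat.sub_right_comm] at h
  rw [inv_pow, ← pow_mul', mul_assoc, ← pow_sub₀ _ hq (Nat.le_sub_one_of_lt hj)]
  exact_mod_cast h

open scoped Classical in
lemma sum_card_filter_pow_dvd_le (d : ℕ) {C : Finset K} (hC : 0 ∉ C) {φ : K[X]}
    (hφm : φ.Monic) (hφ : Irreducible φ) :
    (∑ p ∈ monicsWithConst d C,
        (((Finset.Icc 1 d).filter fun j => j * φ.natDegree < d ∧ φ ^ j ∣ p).card : ℝ)) ≤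
      C.card * (Nat.card K : ℝ) ^ (d - 1) * (2 / (Nat.card K : ℝ) ^ φ.natDegree) := by
  have hq : (2 : ℝ) ≤ Nat.card K := by exact_mod_cast Finite.one_lt_card
  have hqm : (2 : ℝ) ≤ (Nat.card K : ℝ) ^ φ.natDegree :=
    hq.trans (le_self_pow₀ (by linarith) hφ.natDegree_pos.ne')
  set N : ℝ := C.card * (Nat.card K : ℝ) ^ (d - 1)
  set x : ℝ := ((Nat.card K : ℝ) ^ φ.natDegree)⁻¹ with hx
  calc _ = ∑ j ∈ Finset.Icc 1 d, (((monicsWithConst d C).filter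
          fun p => j * φ.natDegree < d ∧ φ ^ j ∣ p).card : ℝ) :=
        mod_cast Finset.sum_card_bipartiteAbove_eq_sum_card_bipartiteBelow
          fun p j => j * φ.natDegree < d ∧ φ ^ j ∣ p
    _ ≤ ∑ j ∈ Finset.Icc 1 d, N * x ^ j := by
        refine Finset.sum_le_sum fun j _ => ?_
        by_cases hj : j * φ.natDegree < d
        · simpa only [hj, true_and] using card_filter_pow_dvd_monicsWithConst_le hC hφm hj
        · simp only [hj, false_and, Finset.filter_false, Finset.card_empty, Nat.cast_zero]
          positivity
    _ = N * ∑ j ∈ Finset.Icc 1 d, x ^ j := (Finset.mul_sum _ _ _).symm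
    _ ≤ N * (2 * x) := mul_le_mul_of_nonneg_left
        (sum_Icc_pow_le_two_mul (by positivity) (inv_anti₀ two_pos hqm) d) (by positivity)
    _ = N * (2 / (Nat.card K : ℝ) ^ φ.natDegree) := by rw [hx, div_eq_mul_inv]

lemma card_monicIrreducibles_mul_le {m : ℕ} (hm : 1 ≤ m) :
    (monicIrreducibles K m).card * (2 / (Nat.card K : ℝ) ^ m) ≤ 2 / m := by
  have hq : (0 : ℝ) < Nat.card K := by exact_mod_cast Nat.card_pos
  have h : (m * (monicIrreducibles K m).card : ℝ) ≤ (Nat.card K : ℝ) ^ m := by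
    exact_mod_cast mul_card_monicIrreducibles_le m
  rw [mul_div_assoc', div_le_div_iff₀ (by positivity) (by positivity)]
  linarith

lemma sum_Icc_two_div_le (d : ℕ) : ∑ m ∈ Finset.Icc 1 d, (2 / m : ℝ) ≤ 2 * (1 + Real.log d) := by
  have h := harmonic_le_one_add_log d
  rw [harmonic_eq_sum_Icc] at h
  push_cast at h
  simpa only [div_eq_mul_inv, ← Finset.mul_sum] using mul_le_mul_of_nonneg_left h two_pos.le

lemma sum_card_factors_monicsWithConst_le (d : ℕ) {C : Finset K} (hC : 0 ∉ C) :
    (∑ p ∈ monicsWithConst d C, ((factors p).card : ℝ)) ≤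
      C.card * (Nat.card K : ℝ) ^ (d - 1) * (3 + 2 * Real.log d) := by
  classical
  set N : ℝ := C.card * (Nat.card K : ℝ) ^ (d - 1)
  have hN : 0 ≤ N := by positivity
  have hcard : ((monicsWithConst d C).card : ℝ) ≤ N := by
    simpa only [N] using mod_cast card_monicsWithConst_le d C
  calc (∑ p ∈ monicsWithConst d C, ((factors p).card : ℝ))
      ≤ ∑ p ∈ monicsWithConst d C, (1 + ∑ m ∈ Finset.Icc 1 d, ∑ φ ∈ monicIrreducibles K m,
          (((Finset.Icc 1 d).filter fun j => j * m < d ∧ φ ^ j ∣ p).card : ℝ)) := by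
        refine Finset.sum_le_sum fun p hp => ?_
        obtain ⟨hpm, rfl, -⟩ := mem_monicsWithConst.1 hp
        exact_mod_cast card_factors_le_one_add_sum hpm.ne_zero
    _ = ((monicsWithConst d C).card : ℝ) + ∑ m ∈ Finset.Icc 1 d, ∑ φ ∈ monicIrreducibles K m,
          ∑ p ∈ monicsWithConst d C,
            (((Finset.Icc 1 d).filter fun j => j * m < d ∧ φ ^ j ∣ p).card : ℝ) := by
        rw [Finset.sum_add_distrib, Finset.sum_const, nsmul_one, Finset.sum_comm]
        exact congrArg _ (Finset.sum_congr rfl fun m _ => Finset.sum_comm)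
    _ ≤ N + ∑ m ∈ Finset.Icc 1 d, ∑ φ ∈ monicIrreducibles K m,
          N * (2 / (Nat.card K : ℝ) ^ m) :=
        add_le_add hcard (Finset.sum_le_sum fun m _ => Finset.sum_le_sum fun φ hφ => by
          obtain ⟨hφm, hφi, rfl⟩ := mem_monicIrreducibles.1 hφ
          exact sum_card_filter_pow_dvd_le d hC hφm hφi)
    _ ≤ N + ∑ m ∈ Finset.Icc 1 d, N * (2 / m) := by
        refine add_le_add_right (Finset.sum_le_sum fun m hm => ?_) _
        rw [Finset.sum_const, nsmul_eq_mul, mul_left_comm]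
        exact mul_le_mul_of_nonneg_left
          (card_monicIrreducibles_mul_le (Finset.mem_Icc.1 hm).1) hN
    _ ≤ N + N * (2 * (1 + Real.log d)) := by
        rw [← Finset.mul_sum]
        exact add_le_add_right (mul_le_mul_of_nonneg_left (sum_Icc_two_div_le d) hN) _
    _ = N * (3 + 2 * Real.log d) := by ring

end Factorization

section LinearAlgebra

variable {K V : Type*} [Field K] [AddCommGroup V] [Module K V]

lemma card_linearEquiv_le_mul_card_specialLinearGroup [Finite K] :
    Nat.card (V ≃ₗ[K] V) ≤ (Nat.card K - 1) * Nat.card (SpecialLinearGroup K V) := by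
  let det : (V ≃ₗ[K] V) →* Kˣ := LinearEquiv.det
  have hker : Nat.card det.ker = Nat.card (SpecialLinearGroup K V) := rfl
  rw [← det.ker.card_mul_index, hker, mul_comm, ← Nat.card_units, Subgroup.index_ker]
  exact Nat.mul_le_mul_right _ (Subgroup.card_le_card_group _)

variable [Module.Finite K V]

lemma exists_linearEquiv_det_eq_and_forall_mem_eq {W : Submodule K V} (hW : W ≠ ⊤) (c : Kˣ) :
    ∃ e : V ≃ₗ[K] V, e.det = c ∧ ∀ w ∈ W, e w = w := by
  obtain ⟨f, hf, hWf⟩ := W.exists_le_ker_of_lt_top hW.lt_top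
  obtain ⟨u, hu⟩ := LinearMap.surjective hf (c - 1)
  have hunit : IsUnit (1 + f u) := by simp [hu]
  refine ⟨LinearEquiv.dilatransvection hunit, Units.ext ?_, fun w hw => ?_⟩
  · rw [LinearEquiv.coe_det, LinearEquiv.dilatransvection.coe_toLinearMap,
      LinearMap.transvection.det, hu, add_sub_cancel]
  · rw [LinearEquiv.dilatransvection.apply, LinearMap.mem_ker.1 (hWf hw), zero_smul, add_zero]

variable {M : Type*} [AddCommGroup M] [Module K M] {T T' : M →ₗ[K] V}

lemma exists_linearEquiv_comp_eq_of_ker_eq (h : LinearMap.ker T = LinearMap.ker T') :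
    ∃ e : V ≃ₗ[K] V, e ∘ₗ T = T' := by
  obtain ⟨e, he⟩ := Submodule.exists_linearEquiv_restrict_eq
    (T.quotKerEquivRange.symm ≪≫ₗ Submodule.quotEquivOfEq _ _ h ≪≫ₗ T'.quotKerEquivRange)
  refine ⟨e, LinearMap.ext fun x => ?_⟩
  have hx := LinearMap.quotKerEquivRange_symm_apply_image T x (LinearMap.mem_range_self T x)
  simpa [hx] using (he ⟨T x, LinearMap.mem_range_self T x⟩).symm

lemma exists_specialLinearGroup_comp_eq_of_ker_eq (h : LinearMap.ker T = LinearMap.ker T')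
    (hT : LinearMap.range T ≠ ⊤) :
    ∃ e : SpecialLinearGroup K V, e.toLinearEquiv ∘ₗ T = T' := by
  obtain ⟨e, rfl⟩ := exists_linearEquiv_comp_eq_of_ker_eq h
  obtain ⟨d, hd, hdT⟩ := exists_linearEquiv_det_eq_and_forall_mem_eq hT e.det⁻¹
  refine ⟨⟨e * d, by rw [map_mul, hd, mul_inv_cancel]⟩, LinearMap.ext fun x => ?_⟩
  exact congrArg e (hdT _ (LinearMap.mem_range_self T x))

end LinearAlgebra

section VectorMinpoly

variable {K V : Type*} [Field K] [AddCommGroup V] [Module K V]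

/-- The linear map `r ↦ r(f) v` from `K[X]` onto the `f`-cyclic subspace generated by `v`. -/
noncomputable def cyclicMap (f : End K V) (v : V) : K[X] →ₗ[K] V :=
  LinearMap.applyₗ v ∘ₗ (aeval f).toLinearMap

open scoped Classical in
/-- The minimal polynomial of the vector `v` with respect to the endomorphism `f`: the monic
generator of the ideal of all `r` with `r(f) v = 0`, or `0` if this ideal is trivial. -/
noncomputable def minpolyAt (f : End K V) (v : V) : K[X] :=
  normalize (Submodule.IsPrincipal.generator (Ideal.torsionOf K[X] (AEval' f) (AEval'.of f v)))

@[simp]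
lemma cyclicMap_apply (f : End K V) (v : V) (r : K[X]) : cyclicMap f v r = aeval f r v := rfl

lemma cyclicMap_X_mul (f : End K V) (v : V) (r : K[X]) :
    cyclicMap f v (X * r) = f (cyclicMap f v r) := by
  simp

lemma cyclicMap_eq_zero_iff {f : End K V} {v : V} {r : K[X]} :
    cyclicMap f v r = 0 ↔ minpolyAt f v ∣ r := by
  classical
  rw [minpolyAt, normalize_dvd_iff, ← Submodule.IsPrincipal.mem_iff_generator_dvd,
    Ideal.mem_torsionOf_iff]
  exact Iff.rfl

lemma ker_cyclicMap_eq_of_minpolyAt_eq {f g : End K V} {v w : V}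
    (h : minpolyAt f v = minpolyAt g w) :
    LinearMap.ker (cyclicMap f v) = LinearMap.ker (cyclicMap g w) := by
  ext r
  rw [LinearMap.mem_ker, LinearMap.mem_ker, cyclicMap_eq_zero_iff, cyclicMap_eq_zero_iff, h]

variable [Module.Finite K V] (f : End K V) (v : V)

lemma minpolyAt_dvd_charpoly : minpolyAt f v ∣ f.charpoly :=
  cyclicMap_eq_zero_iff.1 (by simp [f.aeval_self_charpoly])

lemma monic_minpolyAt : (minpolyAt f v).Monic := by
  classical
  refine monic_normalize fun h => f.charpoly_monic.ne_zero ?_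
  simpa [minpolyAt, h] using minpolyAt_dvd_charpoly f v

lemma card_factors_charpoly_le :
    (factors f.charpoly).card ≤
      (factors (minpolyAt f v)).card + (finrank K V - (minpolyAt f v).natDegree) := by
  obtain ⟨r, hr⟩ := minpolyAt_dvd_charpoly f v
  have hp := monic_minpolyAt f v
  have hrm : r.Monic := hp.of_mul_monic_left (hr ▸ f.charpoly_monic)
  rw [← f.charpoly_natDegree, hr, hp.natDegree_mul hrm, Nat.add_sub_cancel_left,
    card_factors_mul hp.ne_zero hrm.ne_zero]
  exact Nat.add_le_add_left (card_factors_le_natDegree hrm.ne_zero) _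

lemma natDegree_minpolyAt_ne_zero (hv : v ≠ 0) : (minpolyAt f v).natDegree ≠ 0 := fun h => by
  have h1 : cyclicMap f v 1 = 0 := by
    rw [cyclicMap_eq_zero_iff, (monic_minpolyAt f v).natDegree_eq_zero.1 h]
  exact hv (by simpa using h1)

lemma natDegree_minpolyAt_le_finrank : (minpolyAt f v).natDegree ≤ finrank K V := by
  rw [← f.charpoly_natDegree]
  exact natDegree_le_of_dvd (minpolyAt_dvd_charpoly f v) f.charpoly_monic.ne_zero

lemma finrank_range_cyclicMap_le :
    finrank K (LinearMap.range (cyclicMap f v)) ≤ (minpolyAt f v).natDegree := by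
  set p := minpolyAt f v
  have hle : LinearMap.range (cyclicMap f v) ≤
      (degreeLT K p.natDegree).map (cyclicMap f v) := by
    rintro _ ⟨r, rfl⟩
    refine ⟨r %ₘ p, ?_, ?_⟩
    · rw [SetLike.mem_coe, mem_degreeLT, ← degree_eq_natDegree (monic_minpolyAt f v).ne_zero]
      exact degree_modByMonic_lt r (monic_minpolyAt f v)
    · conv_rhs => rw [← modByMonic_add_div r p, map_add,
        cyclicMap_eq_zero_iff.2 (dvd_mul_right p _), add_zero]
  have : Module.Finite K (degreeLT K p.natDegree) := .equiv (degreeLTEquiv K _).symm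
  calc finrank K (LinearMap.range (cyclicMap f v))
      ≤ finrank K ((degreeLT K p.natDegree).map (cyclicMap f v)) := Submodule.finrank_mono hle
    _ ≤ finrank K (degreeLT K p.natDegree) := Submodule.finrank_map_le _ _
    _ = p.natDegree := by rw [(degreeLTEquiv K _).finrank_eq, finrank_fin_fun]

variable {f v}

lemma range_cyclicMap_ne_top (h : (minpolyAt f v).natDegree < finrank K V) :
    LinearMap.range (cyclicMap f v) ≠ ⊤ := fun htop => by
  have := finrank_range_cyclicMap_le f v
  rw [htop, finrank_top] at this
  omega

lemma coeff_zero_minpolyAt_ne_zero (hf : LinearMap.det f ≠ 0) : (minpolyAt f v).coeff 0 ≠ 0 := by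
  obtain ⟨r, hr⟩ := minpolyAt_dvd_charpoly f v
  intro h
  exact hf (by rw [f.det_eq_sign_charpoly_coeff, hr, mul_coeff_zero, h, zero_mul, mul_zero])

lemma minpolyAt_eq_charpoly (h : (minpolyAt f v).natDegree = finrank K V) :
    minpolyAt f v = f.charpoly :=
  (eq_of_monic_of_dvd_of_natDegree_le (monic_minpolyAt f v) f.charpoly_monic
    (minpolyAt_dvd_charpoly f v) (by rw [f.charpoly_natDegree, h])).symm

lemma coeff_zero_minpolyAt_eq (h : (minpolyAt f v).natDegree = finrank K V) :
    (minpolyAt f v).coeff 0 = (-1) ^ finrank K V * LinearMap.det f := by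
  rw [f.det_eq_sign_charpoly_coeff, ← minpolyAt_eq_charpoly h, ← mul_assoc, ← mul_pow]
  simp

end VectorMinpoly

section Counting

variable {K V : Type*} [Field K] [AddCommGroup V] [Module K V]

/- Fix one pair, with cyclic map `T₀`, and choose for every cyclic map `T` of another pair some
`s T` with `ρ (s T) ∘ T₀ = T`. The map `(g, v) ↦ g⁻¹ * s T` is injective: its value sends
`T₀ (X * r)` to `T r`, so it determines `T`, and then `g` and `v = T 1`. -/
lemma ncard_setOf_minpolyAt_eq_le_card {G : Type*} [Group G] [Finite G] (ρ : G →* End K V)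
    (p : K[X])
    (hρ : ∀ x y : G × V, minpolyAt (ρ x.1) x.2 = p → minpolyAt (ρ y.1) y.2 = p →
      ∃ g, ρ g ∘ₗ cyclicMap (ρ x.1) x.2 = cyclicMap (ρ y.1) y.2) :
    {x : G × V | minpolyAt (ρ x.1) x.2 = p}.ncard ≤ Nat.card G := by
  obtain hempty | ⟨x₀, hx₀⟩ := {x : G × V | minpolyAt (ρ x.1) x.2 = p}.eq_empty_or_nonempty
  · simp [hempty]
  let T (x : G × V) : K[X] →ₗ[K] V := cyclicMap (ρ x.1) x.2
  have hT (U : K[X] →ₗ[K] V) : ∃ g, ∀ x, minpolyAt (ρ x.1) x.2 = p → T x = U →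
      ρ g ∘ₗ T x₀ = U := by
    by_cases hU : ∃ x, minpolyAt (ρ x.1) x.2 = p ∧ T x = U
    · obtain ⟨x, hx, rfl⟩ := hU
      exact (hρ x₀ x hx₀ hx).imp fun g hg _ _ _ => hg
    · exact ⟨1, fun x hx hxU => (hU ⟨x, hx, hxU⟩).elim⟩
  choose s hs using hT
  have apply_X_mul (x) (hx : minpolyAt (ρ x.1) x.2 = p) (r : K[X]) :
      ρ (x.1⁻¹ * s (T x)) (T x₀ (X * r)) = T x r := by
    rw [map_mul, Module.End.mul_apply, show ρ (s (T x)) (T x₀ (X * r)) = T x (X * r) from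
      LinearMap.congr_fun (hs _ x hx rfl) _, cyclicMap_X_mul,
      ← Module.End.mul_apply, ← map_mul, inv_mul_cancel, map_one, Module.End.one_apply]
  rw [← Set.ncard_univ]
  refine Set.ncard_le_ncard_of_injOn (fun x => x.1⁻¹ * s (T x)) (fun _ _ => Set.mem_univ _) ?_
  rintro x hx y hy (hxy : x.1⁻¹ * s (T x) = y.1⁻¹ * s (T y))
  have hTxy : T x = T y := LinearMap.ext fun r => by
    rw [← apply_X_mul x hx, hxy, apply_X_mul y hy]
  rw [hTxy, mul_left_inj, inv_inj] at hxy
  exact Prod.ext hxy (by simpa [T] using LinearMap.congr_fun hTxy 1)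

variable [Finite V]

lemma ncard_setOf_minpolyAt_eq_le_card_linearEquiv (p : K[X]) :
    {x : (V ≃ₗ[K] V) × V | minpolyAt (x.1 : End K V) x.2 = p}.ncard ≤ Nat.card (V ≃ₗ[K] V) :=
  have : Finite (V ≃ₗ[K] V) := DFunLike.finite _
  ncard_setOf_minpolyAt_eq_le_card LinearEquiv.automorphismGroup.toLinearMapMonoidHom p
    fun _ _ hx hy => exists_linearEquiv_comp_eq_of_ker_eq
      (ker_cyclicMap_eq_of_minpolyAt_eq (hx.trans hy.symm))

lemma ncard_setOf_minpolyAt_eq_le_card_specialLinearGroup {p : K[X]}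
    (hp : p.natDegree < finrank K V) :
    {x : SpecialLinearGroup K V × V | minpolyAt (x.1 : V →ₗ[K] V) x.2 = p}.ncard ≤
      Nat.card (SpecialLinearGroup K V) :=
  have : Finite (V ≃ₗ[K] V) := DFunLike.finite _
  ncard_setOf_minpolyAt_eq_le_card
    (LinearEquiv.automorphismGroup.toLinearMapMonoidHom.comp SpecialLinearGroup.toLinearEquiv) p
    fun _ _ hx hy => exists_specialLinearGroup_comp_eq_of_ker_eq
      (ker_cyclicMap_eq_of_minpolyAt_eq (hx.trans hy.symm)) (range_cyclicMap_ne_top (hx ▸ hp))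

lemma ncard_setOf_minpolyAt_eq_le_mul_card_specialLinearGroup [Finite K] (p : K[X]) :
    {x : SpecialLinearGroup K V × V | minpolyAt (x.1 : V →ₗ[K] V) x.2 = p}.ncard ≤
      (Nat.card K - 1) * Nat.card (SpecialLinearGroup K V) := by
  have : Finite (V ≃ₗ[K] V) := DFunLike.finite _
  refine le_trans ?_ ((ncard_setOf_minpolyAt_eq_le_card_linearEquiv p).trans
    card_linearEquiv_le_mul_card_specialLinearGroup)
  exact Set.ncard_le_ncard_of_injOn (Prod.map Subtype.val id) (fun _ h => h)
    (Subtype.val_injective.prodMap Function.injective_id).injOn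

end Counting

section Average

lemma sum_comp_le_mul_sum {α β : Type*} [DecidableEq β] {s : Finset α} {t : Finset β} {g : α → β}
    {f : β → ℝ} {B : ℝ} (hg : ∀ a ∈ s, g a ∈ t) (hf : ∀ b ∈ t, 0 ≤ f b)
    (hB : ∀ b ∈ t, ((s.filter (g · = b)).card : ℝ) ≤ B) :
    ∑ a ∈ s, f (g a) ≤ B * ∑ b ∈ t, f b := by
  rw [← Finset.sum_fiberwise_of_maps_to hg, Finset.mul_sum]
  refine Finset.sum_le_sum fun b hb => ?_
  rw [Finset.sum_congr rfl fun a ha => congrArg f (Finset.mem_filter.1 ha).2, Finset.sum_const,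
    nsmul_eq_mul]
  exact mul_le_mul_of_nonneg_right (hB b hb) (hf b hb)

lemma sub_one_mul_sum_pow_mul_le {q : ℝ} (hq : 2 ≤ q) (n : ℕ) (L : ℝ) :
    (q - 1) * ∑ d ∈ Finset.Icc 1 n, q ^ (d - 1) * (L + (n - d)) ≤ (q ^ n - 1) * (L + 1) := by
  induction n generalizing L with
  | zero => simp
  | succ n ih =>
    have hsum : ∑ d ∈ Finset.Icc 1 n, q ^ (d - 1) * (L + ((n + 1 : ℕ) - d)) =
        ∑ d ∈ Finset.Icc 1 n, q ^ (d - 1) * (L + 1 + (n - d)) :=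
      Finset.sum_congr rfl fun d _ => by push_cast; ring
    rw [Finset.sum_Icc_succ_top (by omega), hsum, mul_add]
    have hqn : 0 ≤ q ^ n * (q - 2) := mul_nonneg (by positivity) (by linarith)
    have := ih (L + 1)
    simp only [Nat.add_sub_cancel, sub_self, add_zero, pow_succ]
    linarith

variable {K V : Type*} [Field K] [AddCommGroup V] [Module K V]

lemma exists_coeff_zero_mem_and_ncard_le [Finite K] [Finite V] {d : ℕ}
    (hd : d ≤ finrank K V) :
    ∃ (C : Finset K) (B : ℕ), 0 ∉ C ∧
      B * C.card ≤ Nat.card (SpecialLinearGroup K V) * (Nat.card K - 1) ∧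
      (∀ x : SpecialLinearGroup K V × V, (minpolyAt (x.1 : V →ₗ[K] V) x.2).natDegree = d →
        (minpolyAt (x.1 : V →ₗ[K] V) x.2).coeff 0 ∈ C) ∧
      ∀ p : K[X], p.natDegree = d →
        {x : SpecialLinearGroup K V × V | minpolyAt (x.1 : V →ₗ[K] V) x.2 = p}.ncard ≤ B := by
  classical
  have := Fintype.ofFinite K
  have det_eq (g : SpecialLinearGroup K V) : LinearMap.det (g : V →ₗ[K] V) = 1 := by
    rw [← LinearEquiv.coe_det, g.2, Units.val_one]
  obtain hd | rfl := hd.lt_or_eq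
  · refine ⟨Finset.univ.erase 0, Nat.card (SpecialLinearGroup K V), Finset.notMem_erase _ _, ?_,
      fun x _ => ?_, fun p hp => ?_⟩
    · rw [Finset.card_erase_of_mem (Finset.mem_univ _), Finset.card_univ,
        Nat.card_eq_fintype_card (α := K)]
    · exact Finset.mem_erase.2
        ⟨coeff_zero_minpolyAt_ne_zero (by simp [det_eq]), Finset.mem_univ _⟩
    · exact ncard_setOf_minpolyAt_eq_le_card_specialLinearGroup (hp ▸ hd)
  · refine ⟨{(-1) ^ finrank K V}, (Nat.card K - 1) * Nat.card (SpecialLinearGroup K V), ?_, ?_,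
      fun x hx => ?_, fun p _ => ncard_setOf_minpolyAt_eq_le_mul_card_specialLinearGroup p⟩
    · simpa using (pow_ne_zero _ (neg_ne_zero.2 one_ne_zero)).symm
    · rw [Finset.card_singleton, mul_one, mul_comm]
    · rw [coeff_zero_minpolyAt_eq hx, det_eq, mul_one, Finset.mem_singleton]

variable [Fintype (SpecialLinearGroup K V)]

lemma sum_card_factors_minpolyAt_le [Finite K] [Fintype V] {d : ℕ} (hd : d ≤ finrank K V) {c : ℝ}
    (hc : 0 ≤ c) :
    ∑ x : SpecialLinearGroup K V × V with (minpolyAt (x.1 : V →ₗ[K] V) x.2).natDegree = d,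
        ((factors (minpolyAt (x.1 : V →ₗ[K] V) x.2)).card + c) ≤
      Nat.card (SpecialLinearGroup K V) * (Nat.card K - 1) *
        ((Nat.card K : ℝ) ^ (d - 1) * (3 + 2 * Real.log d + c)) := by
  classical
  obtain ⟨C, B, hC, hBC, hmem, hB⟩ := exists_coeff_zero_mem_and_ncard_le hd
  have : 0 ≤ Real.log d := Real.log_natCast_nonneg d
  have hBC' : (B * C.card : ℝ) ≤
      Nat.card (SpecialLinearGroup K V) * (Nat.card K - 1) := by
    rw [← Nat.cast_pred Nat.card_pos]
    exact_mod_cast hBC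
  calc _ ≤ B * ∑ p ∈ monicsWithConst d C, ((factors p).card + c) := by
        refine sum_comp_le_mul_sum (g := fun x : SpecialLinearGroup K V × V =>
          minpolyAt (x.1 : V →ₗ[K] V) x.2) (f := fun p => (factors p).card + c)
          (fun x hx => ?_) (fun p _ => by positivity) fun p hp => ?_
        · have hx := (Finset.mem_filter.1 hx).2
          exact mem_monicsWithConst.2 ⟨monic_minpolyAt _ _, hx, hmem x hx⟩
        · refine Nat.cast_le.2 (le_trans ?_ (hB p (mem_monicsWithConst.1 hp).2.1))
          rw [← Set.ncard_coe_finset]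
          exact Set.ncard_le_ncard (fun x hx => (Finset.mem_filter.1 hx).2) (Set.toFinite _)
    _ ≤ B * (C.card * (Nat.card K : ℝ) ^ (d - 1) * (3 + 2 * Real.log d + c)) := by
        have h : ((monicsWithConst d C).card : ℝ) ≤ C.card * (Nat.card K : ℝ) ^ (d - 1) :=
          mod_cast card_monicsWithConst_le d C
        rw [Finset.sum_add_distrib, Finset.sum_const, nsmul_eq_mul, mul_add _ _ c]
        exact mul_le_mul_of_nonneg_left (add_le_add (sum_card_factors_monicsWithConst_le d hC)
          (mul_le_mul_of_nonneg_right h hc)) (Nat.cast_nonneg _)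
    _ = B * C.card * ((Nat.card K : ℝ) ^ (d - 1) * (3 + 2 * Real.log d + c)) := by ring
    _ ≤ _ := mul_le_mul_of_nonneg_right hBC' (by positivity)

lemma mul_sum_card_factors_charpoly_le_sum_minpolyAt [Fintype V] :
    ((Nat.card K : ℝ) ^ finrank K V - 1) *
        ∑ g : SpecialLinearGroup K V, ((factors (g : V →ₗ[K] V).charpoly).card : ℝ) ≤
      ∑ d ∈ Finset.Icc 1 (finrank K V), ∑ x : SpecialLinearGroup K V × V with
        (minpolyAt (x.1 : V →ₗ[K] V) x.2).natDegree = d,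
        ((factors (minpolyAt (x.1 : V →ₗ[K] V) x.2)).card + ((finrank K V : ℝ) - d)) := by
  classical
  have hcard : ((Finset.univ.erase (0 : V)).card : ℝ) = (Nat.card K : ℝ) ^ finrank K V - 1 := by
    rw [Finset.cast_card_erase_of_mem (Finset.mem_univ _), Finset.card_univ,
      ← Nat.card_eq_fintype_card, Module.natCard_eq_pow_finrank (K := K), Nat.cast_pow]
  have hmaps : ∀ x ∈ (Finset.univ : Finset (SpecialLinearGroup K V)) ×ˢ Finset.univ.erase (0 : V),
      (minpolyAt (x.1 : V →ₗ[K] V) x.2).natDegree ∈ Finset.Icc 1 (finrank K V) := fun x hx => by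
    rw [Finset.mem_product, Finset.mem_erase] at hx
    exact Finset.mem_Icc.2 ⟨Nat.one_le_iff_ne_zero.2 (natDegree_minpolyAt_ne_zero _ _ hx.2.1),
      natDegree_minpolyAt_le_finrank _ _⟩
  rw [← hcard, ← nsmul_eq_mul, ← Finset.sum_const, Finset.sum_comm, ← Finset.sum_product',
    ← Finset.sum_fiberwise_of_maps_to hmaps]
  refine Finset.sum_le_sum fun d hd => ?_
  have hdn : (d : ℝ) ≤ finrank K V := Nat.cast_le.2 (Finset.mem_Icc.1 hd).2
  calc _ ≤ _ := Finset.sum_le_sum fun x hx => ?_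
    _ ≤ _ := Finset.sum_le_sum_of_subset_of_nonneg
      (Finset.filter_subset_filter _ (Finset.subset_univ _)) fun x _ _ =>
        add_nonneg (Nat.cast_nonneg _) (sub_nonneg.2 hdn)
  have h := card_factors_charpoly_le (x.1 : V →ₗ[K] V) x.2
  rw [(Finset.mem_filter.1 hx).2] at h
  rw [← Nat.cast_sub (Finset.mem_Icc.1 hd).2]
  exact_mod_cast h

lemma sum_card_factors_charpoly_le [Finite K] [Finite V] (hV : 0 < finrank K V) :
    ∑ g : SpecialLinearGroup K V, ((factors (g : V →ₗ[K] V).charpoly).card : ℝ) ≤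
      (4 + 2 * Real.log (finrank K V)) * Nat.card (SpecialLinearGroup K V) := by
  have := Fintype.ofFinite V
  set n := finrank K V
  set N := (Nat.card (SpecialLinearGroup K V) : ℝ)
  have hq : (2 : ℝ) ≤ Nat.card K := by exact_mod_cast Finite.one_lt_card
  have hqn : 0 < (Nat.card K : ℝ) ^ n - 1 := sub_pos.2 (one_lt_pow₀ (by linarith) hV.ne')
  refine le_of_mul_le_mul_left (mul_sum_card_factors_charpoly_le_sum_minpolyAt.trans ?_) hqn
  calc _ ≤ ∑ d ∈ Finset.Icc 1 n, N * (Nat.card K - 1) *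
          ((Nat.card K : ℝ) ^ (d - 1) * (3 + 2 * Real.log n + (n - d))) := by
        refine Finset.sum_le_sum fun d hd => ?_
        obtain ⟨hd1, hdn⟩ := Finset.mem_Icc.1 hd
        have hdn' : (d : ℝ) ≤ n := Nat.cast_le.2 hdn
        refine (sum_card_factors_minpolyAt_le hdn (sub_nonneg.2 hdn')).trans ?_
        have : Real.log d ≤ Real.log n := Real.log_le_log (by exact_mod_cast hd1) hdn'
        have : 0 ≤ N * (Nat.card K - 1) := mul_nonneg (Nat.cast_nonneg _) (by linarith)
        gcongr
    _ = N * ((Nat.card K - 1) * ∑ d ∈ Finset.Icc 1 n,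
          (Nat.card K : ℝ) ^ (d - 1) * (3 + 2 * Real.log n + (n - d))) := by
        rw [← Finset.mul_sum, mul_assoc]
    _ ≤ N * (((Nat.card K : ℝ) ^ n - 1) * (3 + 2 * Real.log n + 1)) :=
        mul_le_mul_of_nonneg_left (sub_one_mul_sum_pow_mul_le hq n _) (Nat.cast_nonneg _)
    _ = _ := by ring

end Average

lemma ncard_setOf_le_mul_le_sum {α : Type*} [Fintype α] {f : α → ℝ} (hf : ∀ a, 0 ≤ f a) (t : ℝ) :
    {a | t ≤ f a}.ncard * t ≤ ∑ a, f a := by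
  classical
  rw [Set.ncard_eq_toFinset_card', ← nsmul_eq_mul]
  refine (Finset.card_nsmul_le_sum _ f t fun a ha => by simpa using ha).trans ?_
  exact Finset.sum_le_sum_of_subset_of_nonneg (Finset.subset_univ _) fun a _ _ => hf a

lemma ncard_setOf_charpoly_toLin' {R ι : Type*} [CommRing R] [Fintype ι] [DecidableEq ι]
    (P : R[X] → Prop) :
    {g : Matrix.SpecialLinearGroup ι R | P (g : Matrix ι ι R).charpoly}.ncard =
      {g : SpecialLinearGroup R (ι → R) | P (g : (ι → R) →ₗ[R] ι → R).charpoly}.ncard := by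
  let e : Matrix.SpecialLinearGroup ι R ≃* SpecialLinearGroup R (ι → R) :=
    Matrix.SpecialLinearGroup.toLin'_equiv
  have charpoly_e (g) : (e g : (ι → R) →ₗ[R] ι → R).charpoly = (g : Matrix ι ι R).charpoly :=
    Matrix.charpoly_toLin' _
  rw [← Set.ncard_preimage_of_injective_subset_range e.injective
    (by simp [e.surjective.range_eq])]
  simp only [Set.preimage_ofPred_eq, charpoly_e]

theorem few_elements_with_many_factors_general {K V : Type*} [Field K] [Finite K] [AddCommGroup V]
    [Module K V] [Finite V] (hV : 2 ≤ finrank K V) {ε : ℝ} (hε : 0 < ε) :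
    ({g : SpecialLinearGroup K V | 8 / ε * Real.log (finrank K V) ≤
        (factors (g : V →ₗ[K] V).charpoly).card}.ncard : ℝ) ≤
      ε * Nat.card (SpecialLinearGroup K V) := by
  have : Finite (V ≃ₗ[K] V) := DFunLike.finite _
  have := Fintype.ofFinite (SpecialLinearGroup K V)
  set ℓ := Real.log (finrank K V)
  have hℓ : Real.log 2 ≤ ℓ := Real.log_le_log two_pos (by exact_mod_cast hV)
  have hlog2 := Real.log_two_gt_d9
  refine le_of_mul_le_mul_right ?_ (show 0 < 8 / ε * ℓ from mul_pos (by positivity) (by linarith))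
  calc _ ≤ ∑ g : SpecialLinearGroup K V, ((factors (g : V →ₗ[K] V).charpoly).card : ℝ) :=
        ncard_setOf_le_mul_le_sum (fun _ => Nat.cast_nonneg _) _
    _ ≤ (4 + 2 * ℓ) * Nat.card (SpecialLinearGroup K V) :=
        sum_card_factors_charpoly_le (by omega)
    _ ≤ 8 * ℓ * Nat.card (SpecialLinearGroup K V) :=
        mul_le_mul_of_nonneg_right (by linarith) (Nat.cast_nonneg _)
    _ = _ := by field_simp

/-- For every `ε > 0` there exists `k` such that for every finite field `F_q` and every
`n ≥ 2`, the set of `g ∈ SL_n(F_q)` whose characteristic polynomial has at least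
`k log n` monic irreducible factors (with multiplicity) has cardinality at most
`ε |SL_n(F_q)|`. -/
theorem few_elements_with_many_factors (ε : ℝ) (hε : 0 < ε) :
    ∃ k : ℝ, ∀ (F : Type) [Field F] [Fintype F] (n : ℕ), 2 ≤ n →
      (Set.ncard {g : Matrix.SpecialLinearGroup (Fin n) F |
          k * Real.log n ≤
            ((UniqueFactorizationMonoid.factors
              (Matrix.charpoly (g : Matrix (Fin n) (Fin n) F))).card : ℝ)} : ℝ) ≤
        ε * (Nat.card (Matrix.SpecialLinearGroup (Fin n) F) : ℝ) := by
  refine ⟨8 / ε, fun F _ _ n hn => ?_⟩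
  have h := few_elements_with_many_factors_general (K := F) (V := Fin n → F)
    (by rwa [finrank_fin_fun]) hε
  rw [finrank_fin_fun] at h
  rwa [ncard_setOf_charpoly_toLin' (R := F) (ι := Fin n)
      (fun p => 8 / ε * Real.log n ≤ ((factors p).card : ℝ)),
    Nat.card_congr (Matrix.SpecialLinearGroup.toLin'_equiv (R := F) (n := Fin n)).toEquiv]
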